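/- Under the non-periodicity condition, 𝒫(s) ≠ 1 for every complex s with Re(s) = ρ and s ≠ ρ; consequently 𝒜(s) = 1/(1 − 𝒫(s)) is analytic on the closed half-plane {s : Re(s) ≥ ρ} except at the single point s = ρ, where it has a simple pole with 𝒜(s) ∼ −1/(𝒫′(ρ)(s − ρ)) as s → ρ. -/

import Mathlib

open scoped BigOperators ENNReal
open Filter Asymptotics

noncomputable section

/-- `af P m n` is the number of ordered `m`-tuples `(n₁,…,n_m)` of elements of `P`
with product `n` (so `af P 0 n = 1` iff `n = 1`). -/
def af (P : Set ℕ) (m n : ℕ) : ℕ :=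
  Nat.card {t : Fin m → ℕ // (∀ i, t i ∈ P) ∧ ∏ i, t i = n}

/-- `aTot P n = a(n) = Σ_{m ≥ 0} a_m(n)`. -/
def aTot (P : Set ℕ) (n : ℕ) : ℝ := ∑' m : ℕ, (af P m n : ℝ)

/-- `Acum P N = A(N) = Σ_{1 ≤ n ≤ N} a(n)`. -/
def Acum (P : Set ℕ) (N : ℕ) : ℝ := ∑ n ∈ Finset.Icc 1 N, aTot P n

/-- The Dirichlet series `𝒫(x) = Σ_{n ∈ 𝒫} n^{-x}` at a real point. -/
def Pval (P : Set ℕ) (x : ℝ) : ℝ := ∑' n : P, ((n : ℕ) : ℝ) ^ (-x)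

/-- `𝒫'(x) = -Σ_{n ∈ 𝒫} n^{-x} log n`. -/
def Pderiv1 (P : Set ℕ) (x : ℝ) : ℝ := -∑' n : P, ((n : ℕ) : ℝ) ^ (-x) * Real.log (n : ℕ)

/-- `𝒫''(x) = Σ_{n ∈ 𝒫} n^{-x} (log n)^2`. -/
def Pderiv2 (P : Set ℕ) (x : ℝ) : ℝ := ∑' n : P, ((n : ℕ) : ℝ) ^ (-x) * (Real.log (n : ℕ)) ^ 2

/-- The abscissa of convergence `κ` of the Dirichlet series of `P`, as an extended real
(`⊥` when `P` is finite). -/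
def kappa (P : Set ℕ) : EReal :=
  sInf {x : EReal | ∃ r : ℝ, x = (r : EReal) ∧ Summable (fun n : P => ((n : ℕ) : ℝ) ^ (-r))}

open Classical in
/-- The (possibly infinite) value `𝒫(x) ∈ (0,∞]` of the Dirichlet series at an
extended-real point; at `x = -∞` every term `n^{-x}` is infinite. -/
def PvalE (P : Set ℕ) (x : EReal) : ℝ≥0∞ :=
  if x = ⊥ then ⊤ else ∑' n : P, ENNReal.ofReal (((n : ℕ) : ℝ) ^ (-x.toReal))

/-- The Dirichlet series `𝒫(s) = Σ_{n ∈ 𝒫} n^{-s}` at a complex point. -/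
def PvalC (P : Set ℕ) (s : ℂ) : ℂ := ∑' n : P, ((n : ℕ) : ℂ) ^ (-s)

/-! At a point `s` with `Re s ≥ ρ` the terms of `𝒫(s)` are dominated in norm by those of
`𝒫(ρ) = 1`, so `𝒫(s) = 1` is the equality case of the triangle inequality and forces
`n ^ (s - ρ) = 1` for every `n ∈ 𝒫`. For `s ≠ ρ` this makes all elements of `𝒫` integer powers of
the single complex number `exp (2πi / (s - ρ))`. The rational numbers among the powers of one number
form a cyclic group, so `𝒫` consists of powers of one rational, which must be an integer because
some power of it is: `𝒫` is periodic. The pole at `ρ` is simple because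
`𝒫'(ρ) = -∑ n ^ (-ρ) log n` is negative. -/

/-- A set of natural numbers is periodic when it consists of positive powers of a single integer
`d ≥ 2`; the non-periodicity condition on `𝒫` is the negation of this. -/
def IsPeriodic (S : Set ℕ) : Prop :=
  ∃ d : ℕ, 2 ≤ d ∧ S ⊆ {n : ℕ | ∃ k : ℕ, 1 ≤ k ∧ n = d ^ k}

section Powers

theorem isCyclic_comap_of_injective {G H : Type*} [Group G] [Group H] {φ : G →* H}
    (hφ : Function.Injective φ) (C : Subgroup H) [IsCyclic C] : IsCyclic (C.comap φ) :=
  isCyclic_of_injective (φ.subgroupComap C) fun _ _ h =>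
    Subtype.ext (hφ (congrArg Subtype.val h))

theorem exists_natCast_eq_of_pow_eq_natCast {q : ℚ} (hq : 0 ≤ q) {k n : ℕ} (hk : k ≠ 0)
    (h : q ^ k = n) : ∃ d : ℕ, q = d := by
  have hden : q.den ^ k = 1 := by rw [← Rat.den_pow, h, Rat.den_natCast]
  obtain ⟨d, hd⟩ := Int.eq_ofNat_of_zero_le (Rat.num_nonneg.2 hq)
  refine ⟨d, ?_⟩
  rw [← (Rat.den_eq_one_iff q).1 ((Nat.pow_eq_one.1 hden).resolve_right hk), hd, Int.cast_natCast]

variable {K : Type*} [Field K] [CharZero K] {S : Set ℕ} {x : K}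

theorem exists_rat_forall_eq_zpow (hx : x ≠ 0) (h : ∀ n ∈ S, ∃ k : ℤ, (n : K) = x ^ k) :
    ∃ q : ℚ, q ≠ 0 ∧ ∀ n ∈ S, ∃ k : ℤ, (n : ℚ) = q ^ k := by
  let φ : ℚˣ →* Kˣ := Units.map (Rat.castHom K : ℚ →* K)
  have hφ : Function.Injective φ := Units.map_injective (Rat.castHom K).injective
  have hcyc := isCyclic_comap_of_injective hφ (Subgroup.zpowers (Units.mk0 x hx))
  obtain ⟨g, hg⟩ := (Subgroup.isCyclic_iff_exists_zpowers_eq_top _).1 hcyc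
  refine ⟨g, g.ne_zero, fun n hn => ?_⟩
  obtain ⟨k, hk⟩ := h n hn
  have hn0 : (n : ℚ) ≠ 0 := by
    have hnK : (n : K) ≠ 0 := hk ▸ zpow_ne_zero k hx
    exact_mod_cast hnK
  have hmem : Units.mk0 (n : ℚ) hn0 ∈ Subgroup.zpowers g := by
    rw [hg, Subgroup.mem_comap]
    exact ⟨k, Units.ext (by simp [φ, hk])⟩
  obtain ⟨m, hm⟩ := hmem
  exact ⟨m, by simpa using congrArg Units.val hm.symm⟩

theorem exists_one_le_rat_forall_eq_zpow (hx : x ≠ 0) (h : ∀ n ∈ S, ∃ k : ℤ, (n : K) = x ^ k) :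
    ∃ q : ℚ, 1 ≤ q ∧ ∀ n ∈ S, ∃ k : ℤ, (n : ℚ) = q ^ k := by
  obtain ⟨q, hq0, hq⟩ := exists_rat_forall_eq_zpow hx h
  have habs : ∀ n ∈ S, ∃ k : ℤ, (n : ℚ) = |q| ^ k := fun n hn =>
    (hq n hn).imp fun k hk => by rw [← abs_zpow, ← hk, Nat.abs_cast]
  obtain hq1 | hq1 := le_total 1 |q|
  · exact ⟨|q|, hq1, habs⟩
  · refine ⟨|q|⁻¹, (one_le_inv₀ (abs_pos.2 hq0)).2 hq1, fun n hn => ?_⟩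
    obtain ⟨k, hk⟩ := habs n hn
    exact ⟨-k, by rw [inv_zpow, zpow_neg, inv_inv, hk]⟩

theorem isPeriodic_of_forall_eq_zpow (hS : ∀ n ∈ S, 2 ≤ n) (hx : x ≠ 0)
    (h : ∀ n ∈ S, ∃ k : ℤ, (n : K) = x ^ k) : IsPeriodic S := by
  obtain rfl | ⟨n₀, hn₀⟩ := S.eq_empty_or_nonempty
  · exact ⟨2, le_rfl, Set.empty_subset _⟩
  obtain ⟨q, hq1, hq⟩ := exists_one_le_rat_forall_eq_zpow hx h
  have hpow : ∀ n ∈ S, ∃ k : ℕ, 1 ≤ k ∧ (n : ℚ) = q ^ k := by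
    intro n hn
    obtain ⟨k, hk⟩ := hq n hn
    have hk0 : 0 < k := by
      by_contra! hk0
      have hn1 : (n : ℚ) ≤ 1 := hk ▸ zpow_le_one_of_nonpos₀ hq1 hk0
      exact absurd (hS n hn) (not_le.2 (Nat.lt_succ_of_le (by exact_mod_cast hn1)))
    lift k to ℕ using hk0.le
    exact ⟨k, by omega, by exact_mod_cast hk⟩
  obtain ⟨k₀, hk₀, h₀⟩ := hpow n₀ hn₀
  obtain ⟨d, rfl⟩ :=
    exists_natCast_eq_of_pow_eq_natCast (zero_le_one.trans hq1) (by omega) h₀.symm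
  refine ⟨d, ?_, by exact_mod_cast hpow⟩
  by_contra! hd
  have hn₀1 : n₀ ≤ 1 := by
    have hn₀d : n₀ = d ^ k₀ := by exact_mod_cast h₀
    exact hn₀d ▸ pow_le_one' (by omega) k₀
  exact absurd (hS n₀ hn₀) (by omega)

end Powers

theorem eq_ofReal_of_hasSum_of_norm_le {ι 𝕜 : Type*} [RCLike 𝕜] {z : ι → 𝕜} {r : ι → ℝ} {S : ℝ}
    (hz : HasSum z (S : 𝕜)) (hr : HasSum r S) (hle : ∀ i, ‖z i‖ ≤ r i) (i : ι) :
    z i = (r i : 𝕜) := by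
  have hre : ∀ j, RCLike.re (z j) ≤ r j := fun j => (RCLike.re_le_norm _).trans (hle j)
  have hsum : HasSum (fun j => r j - RCLike.re (z j)) 0 := by
    simpa using hr.sub (RCLike.hasSum_re 𝕜 hz)
  have heq : r i = RCLike.re (z i) :=
    sub_eq_zero.1 (congrFun ((hasSum_zero_iff_of_nonneg fun j => sub_nonneg.2 (hre j)).1 hsum) i)
  rw [heq, RCLike.re_eq_self_of_le (heq ▸ hle i)]

theorem exists_eq_exp_zpow_of_cpow_eq_one {z w : ℂ} (hz : z ≠ 0) (hw : w ≠ 0) (h : z ^ w = 1) :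
    ∃ k : ℤ, z = Complex.exp (2 * Real.pi * Complex.I / w) ^ k := by
  rw [Complex.cpow_def_of_ne_zero hz, Complex.exp_eq_one_iff] at h
  obtain ⟨k, hk⟩ := h
  refine ⟨k, ?_⟩
  rw [← Complex.exp_int_mul, ← mul_div_assoc, ← hk, mul_div_cancel_right₀ _ hw, Complex.exp_log hz]

section LSeries

open scoped ComplexOrder

variable {f : ℕ → ℂ} {x : ℝ} {s : ℂ}

theorem term_eq_term_of_LSeries_eq (hf : 0 ≤ f) (hx : LSeriesSummable f x) (hs : x ≤ s.re)
    (h : LSeries f s = LSeries f x) (n : ℕ) : LSeries.term f s n = LSeries.term f x n := by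
  have hnorm : ∀ m, (‖LSeries.term f x m‖ : ℂ) = LSeries.term f x m := fun m =>
    Complex.norm_of_nonneg' (LSeries.term_nonneg (hf m) x)
  have hval : LSeries f x = ((∑' m, ‖LSeries.term f x m‖ : ℝ) : ℂ) := by
    rw [Complex.ofReal_tsum, LSeries, tsum_congr hnorm]
  have hsum : HasSum (LSeries.term f s) ((∑' m, ‖LSeries.term f x m‖ : ℝ) : ℂ) := by
    rw [← hval, ← h]
    exact (hx.of_re_le_re (by simpa using hs)).hasSum
  rw [← hnorm n]
  exact eq_ofReal_of_hasSum_of_norm_le hsum hx.norm.hasSum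
    (LSeries.norm_term_le_of_re_le_re f (by simpa using hs)) n

theorem natCast_cpow_sub_eq_one_of_LSeries_eq (hf : 0 ≤ f) (hx : LSeriesSummable f x)
    (hs : x ≤ s.re) (h : LSeries f s = LSeries f x) {n : ℕ} (hn : n ≠ 0) (hfn : f n ≠ 0) :
    (n : ℂ) ^ (s - x) = 1 := by
  have hn0 : (n : ℂ) ≠ 0 := Nat.cast_ne_zero.2 hn
  have hterm := term_eq_term_of_LSeries_eq hf hx hs h n
  rw [LSeries.term_of_ne_zero hn, LSeries.term_of_ne_zero hn, div_eq_mul_inv,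
    div_eq_mul_inv, mul_right_inj' hfn, inv_inj] at hterm
  rw [Complex.cpow_sub _ _ hn0, hterm, div_self (by simp [Complex.cpow_eq_zero_iff, hn0])]

theorem isPeriodic_of_LSeries_eq (hf : 0 ≤ f) (hx : LSeriesSummable f x) (hs : x ≤ s.re)
    (hsx : s ≠ x) (h : LSeries f s = LSeries f x) : IsPeriodic {n | 2 ≤ n ∧ f n ≠ 0} := by
  refine isPeriodic_of_forall_eq_zpow (fun n hn => hn.1)
    (Complex.exp_ne_zero (2 * Real.pi * Complex.I / (s - x))) fun n hn => ?_
  have hn0 : n ≠ 0 := by have := hn.1; omega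
  exact exists_eq_exp_zpow_of_cpow_eq_one (Nat.cast_ne_zero.2 hn0) (sub_ne_zero.2 hsx)
    (natCast_cpow_sub_eq_one_of_LSeries_eq hf hx hs h hn0 hn.2)

theorem term_logMul (f : ℕ → ℂ) (s : ℂ) (n : ℕ) :
    LSeries.term (LSeries.logMul f) s n = LSeries.term f s n * Complex.log n := by
  rw [LSeries.term_def, LSeries.term_def]
  split_ifs
  · rw [zero_mul]
  · rw [LSeries.logMul, mul_comm, div_mul_eq_mul_div]

theorem LSeries_logMul_pos (hf : 0 ≤ f) (hx : LSeries.abscissaOfAbsConv f < x) {n : ℕ}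
    (hn : 2 ≤ n) (hfn : f n ≠ 0) : 0 < LSeries (LSeries.logMul f) x := by
  have hlog : 0 ≤ LSeries.logMul f := fun m =>
    mul_nonneg (by simpa [← Complex.natCast_log] using Real.log_natCast_nonneg m) (hf m)
  have hlogn : 0 < LSeries.logMul f n := by
    refine mul_pos ?_ ((hf n).lt_of_ne' hfn)
    rw [← Complex.natCast_log]
    exact_mod_cast Real.log_pos (by exact_mod_cast hn)
  exact (LSeriesSummable_logMul_of_lt_re (by simpa using hx)).tsum_pos
    (fun m => LSeries.term_nonneg (hlog m) x) n (LSeries.term_pos (by omega) hlogn x)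

end LSeries

theorem tendsto_sub_mul_one_div_sub_of_hasDerivAt {𝕜 : Type*} [NontriviallyNormedField 𝕜]
    {f : 𝕜 → 𝕜} {f' a : 𝕜} (hf : HasDerivAt f f' a) (hf' : f' ≠ 0) :
    Tendsto (fun s => (s - a) * (1 / (f a - f s))) (nhdsWithin a {a}ᶜ) (nhds (-1 / f')) := by
  rw [neg_div, one_div]
  refine ((hasDerivAt_iff_tendsto_slope.1 hf).inv₀ hf').neg.congr fun s => ?_
  rw [slope_def_field, inv_div, ← neg_sub (f s), div_neg, mul_neg, mul_one_div]

section DirichletSeries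

open scoped ComplexOrder

variable {P : Set ℕ} {ρ : ℝ} {s : ℂ}

theorem indicator_one_nonneg (P : Set ℕ) : 0 ≤ P.indicator (1 : ℕ → ℂ) :=
  Set.indicator_nonneg fun _ _ => zero_le_one

theorem term_indicator_one (hP : 0 ∉ P) (s : ℂ) :
    LSeries.term (P.indicator 1) s = P.indicator fun n : ℕ => (n : ℂ) ^ (-s) := by
  funext n
  by_cases hn : n ∈ P
  · simp [LSeries.term_of_ne_zero (ne_of_mem_of_not_mem hn hP), hn, Complex.cpow_neg]
  · simp [LSeries.term_def, hn]

theorem PvalC_eq_LSeries (hP : 0 ∉ P) : PvalC P = LSeries (P.indicator 1) := by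
  funext s
  rw [LSeries, term_indicator_one hP, PvalC, ← tsum_subtype]

theorem ofReal_natCast_rpow_neg (n : ℕ) (x : ℝ) :
    (((n : ℝ) ^ (-x) : ℝ) : ℂ) = (n : ℂ) ^ (-(x : ℂ)) := by
  rw [Complex.ofReal_cpow n.cast_nonneg, Complex.ofReal_natCast, Complex.ofReal_neg]

theorem PvalC_ofReal (P : Set ℕ) (x : ℝ) : PvalC P x = Pval P x := by
  simp only [PvalC, Pval, Complex.ofReal_tsum, ofReal_natCast_rpow_neg]

theorem ofReal_Pderiv1 (hP : 0 ∉ P) (x : ℝ) :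
    (Pderiv1 P x : ℂ) = -LSeries (LSeries.logMul (P.indicator 1)) x := by
  have hterm : LSeries.term (LSeries.logMul (P.indicator 1)) x =
      P.indicator fun n : ℕ => (n : ℂ) ^ (-(x : ℂ)) * Real.log n := by
    funext n
    rw [term_logMul, term_indicator_one hP, ← Complex.natCast_log]
    exact (Set.indicator_mul_left P _ fun m : ℕ => (Real.log m : ℂ)).symm
  rw [LSeries, hterm, ← tsum_subtype]
  simp only [Pderiv1, Complex.ofReal_neg, Complex.ofReal_tsum, Complex.ofReal_mul,
    ofReal_natCast_rpow_neg]

theorem abscissaOfAbsConv_indicator_one_lt (hP : 0 ∉ P) (hρκ : kappa P < ρ) :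
    LSeries.abscissaOfAbsConv (P.indicator 1) < ρ := by
  obtain ⟨_, ⟨r, rfl, hr⟩, hrρ⟩ := sInf_lt_iff.1 hρκ
  have hsum : LSeriesSummable (P.indicator 1) r := by
    rw [LSeriesSummable, term_indicator_one hP, ← summable_subtype_iff_indicator]
    exact (Complex.summable_ofReal.2 hr).congr fun n => ofReal_natCast_rpow_neg n r
  exact hsum.abscissaOfAbsConv_le.trans_lt (by simpa using hrρ)

theorem PvalC_ne_one (hP : ∀ n ∈ P, 2 ≤ n) (hρκ : kappa P < ρ) (hρ1 : Pval P ρ = 1)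
    (hnp : ¬ IsPeriodic P) (hs : ρ ≤ s.re) (hsρ : s ≠ ρ) : PvalC P s ≠ 1 := by
  intro h1
  have h0 : 0 ∉ P := fun h => by simpa using hP 0 h
  have hsum : LSeriesSummable (P.indicator 1) ρ :=
    LSeriesSummable_of_abscissaOfAbsConv_lt_re
      (by simpa using abscissaOfAbsConv_indicator_one_lt h0 hρκ)
  have heq : LSeries (P.indicator 1) s = LSeries (P.indicator 1) ρ := by
    rw [← PvalC_eq_LSeries h0, h1, PvalC_ofReal, hρ1, Complex.ofReal_one]
  obtain ⟨d, hd, hsub⟩ := isPeriodic_of_LSeries_eq (indicator_one_nonneg P) hsum hs hsρ heq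
  exact hnp ⟨d, hd, fun n hn => hsub ⟨hP n hn, by simp [hn]⟩⟩

theorem analyticAt_PvalC (hP : 0 ∉ P) (hs : kappa P < s.re) : AnalyticAt ℂ (PvalC P) s := by
  rw [PvalC_eq_LSeries hP]
  exact LSeries_analyticOnNhd _ s (abscissaOfAbsConv_indicator_one_lt hP hs)

theorem hasDerivAt_PvalC (hP : 0 ∉ P) (hρκ : kappa P < ρ) :
    HasDerivAt (PvalC P) (Pderiv1 P ρ) ρ := by
  rw [PvalC_eq_LSeries hP, ofReal_Pderiv1 hP]
  exact LSeries_hasDerivAt (by simpa using abscissaOfAbsConv_indicator_one_lt hP hρκ)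

theorem Pderiv1_neg (hP : ∀ n ∈ P, 2 ≤ n) (hne : P.Nonempty) (hρκ : kappa P < ρ) :
    Pderiv1 P ρ < 0 := by
  have h0 : 0 ∉ P := fun h => by simpa using hP 0 h
  obtain ⟨n, hn⟩ := hne
  have hpos := LSeries_logMul_pos (indicator_one_nonneg P)
    (abscissaOfAbsConv_indicator_one_lt h0 hρκ) (hP n hn) (by simp [hn])
  rw [← neg_neg (LSeries _ _), ← ofReal_Pderiv1 h0, ← Complex.ofReal_neg,
    Complex.zero_lt_real] at hpos
  exact neg_pos.1 hpos

end DirichletSeries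

/-- **No zeros of `1 - 𝒫` on the line `Re s = ρ` except `s = ρ`, and the simple pole of
`𝒜(s) = 1/(1 - 𝒫(s))`.** Under the non-periodicity condition, `𝒫(s) ≠ 1` for `Re s = ρ`,
`s ≠ ρ`; `𝒜` is analytic at every point of the closed half-plane `Re s ≥ ρ` other than
`ρ`; and at `ρ` it has a simple pole with `𝒜(s) ∼ -1/(𝒫'(ρ)(s - ρ))` as `s → ρ`. -/
theorem A_analytic_simple_pole
    (P : Set ℕ) (hP : ∀ n ∈ P, 2 ≤ n) (hP2 : P.Nontrivial)
    (hκ : 1 < PvalE P (kappa P))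
    (ρ : ℝ) (hρ0 : 0 < ρ) (hρκ : kappa P < (ρ : EReal)) (hρ1 : Pval P ρ = 1)
    (hnp : ∀ d : ℕ, 2 ≤ d → ¬ P ⊆ {n : ℕ | ∃ k : ℕ, 1 ≤ k ∧ n = d ^ k}) :
    (∀ s : ℂ, s.re = ρ → s ≠ (ρ : ℂ) → PvalC P s ≠ 1) ∧
    (∀ s : ℂ, ρ ≤ s.re → s ≠ (ρ : ℂ) →
      AnalyticAt ℂ (fun w : ℂ => 1 / (1 - PvalC P w)) s) ∧
    Pderiv1 P ρ ≠ 0 ∧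
    Tendsto (fun s : ℂ => (s - (ρ : ℂ)) * (1 / (1 - PvalC P s)))
      (nhdsWithin (ρ : ℂ) {(ρ : ℂ)}ᶜ)
      (nhds (-1 / (Pderiv1 P ρ : ℂ))) := by
  have h0 : 0 ∉ P := fun h => by simpa using hP 0 h
  have hne : ∀ s : ℂ, ρ ≤ s.re → s ≠ ρ → PvalC P s ≠ 1 := fun s =>
    PvalC_ne_one hP hρκ hρ1 fun ⟨d, hd, hPd⟩ => hnp d hd hPd
  have hderiv : Pderiv1 P ρ ≠ 0 := (Pderiv1_neg hP hP2.nonempty hρκ).ne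
  have hone : PvalC P ρ = 1 := by rw [PvalC_ofReal, hρ1, Complex.ofReal_one]
  refine ⟨fun s hs => hne s hs.ge, fun s hs hsρ => ?_, hderiv, ?_⟩
  · have han := analyticAt_PvalC h0 (hρκ.trans_le (EReal.coe_le_coe hs))
    exact analyticAt_const.div (analyticAt_const.sub han) (sub_ne_zero.2 (hne s hs hsρ).symm)
  · simpa only [hone] using tendsto_sub_mul_one_div_sub_of_hasDerivAt
      (hasDerivAt_PvalC h0 hρκ) (Complex.ofReal_ne_zero.2 hderiv)
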